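/- Let d ≥ 1 be an integer, let C₁ > 0 and 1 ≤ p < ∞. Then there exists a constant ε₀ > 0, depending only on C₁, p and d, such that the following holds: for every measurable function f : ℝ^d → ℝ satisfying 0 ≤ f(x) ≤ f(0) for every x ∈ ℝ^d and ‖f‖_{L^p(ℝ^d)} ≤ C₁ · f(0) < ∞, one has ∫_{ℝ^d} K_d(y) (f(0) − f(y)) dy ≥ ε₀ · f(0). -/

import Mathlib

open MeasureTheory Real Set

/-- The Bessel kernel `K_d`, convolution kernel of `(1-Δ)⁻¹` on `ℝ^d`. -/
noncomputable def besselKernel (d : ℕ) (x : EuclideanSpace ℝ (Fin d)) : ℝ :=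
  ∫ s in Set.Ioi (0:ℝ),
    Real.exp (-s) * (4 * Real.pi * s) ^ (-(d:ℝ)/2) * Real.exp (-‖x‖^2 / (4*s))

noncomputable def bkF (d : ℕ) (z : EuclideanSpace ℝ (Fin d) × ℝ) : ℝ :=
  Real.exp (-z.2) * (4 * Real.pi * z.2) ^ (-(d:ℝ)/2) * Real.exp (-‖z.1‖^2 / (4*z.2))

lemma bkF_nonneg (d : ℕ) (x : EuclideanSpace ℝ (Fin d)) (s : ℝ) (hs : 0 < s) :
    0 ≤ bkF d (x, s) := by
  unfold bkF; positivity

lemma bkF_section (d : ℕ) (s : ℝ) (hs : 0 < s) :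
    Integrable (fun x => bkF d (x, s)) ∧ ∫ x, bkF d (x, s) = Real.exp (-s) := by
  have hb : 0 < 1 / (4 * s) := by positivity
  have h := GaussianFourier.integral_rexp_neg_mul_sq_norm (V := EuclideanSpace ℝ (Fin d)) hb
  have hfun : (fun x : EuclideanSpace ℝ (Fin d) => bkF d (x, s)) = fun x =>
      (Real.exp (-s) * (4 * Real.pi * s) ^ (-(d:ℝ)/2)) * Real.exp (-(1 / (4*s)) * ‖x‖^2) := by
    funext x
    unfold bkF
    congr 2
    ring
  have hI : ∫ x, bkF d (x, s) = Real.exp (-s) := by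
    rw [hfun, integral_const_mul, h, finrank_euclideanSpace_fin]
    have : π / (1 / (4 * s)) = 4 * π * s := by field_simp
    rw [this, mul_assoc, ← Real.rpow_add (by positivity)]
    have : -(d:ℝ)/2 + d/2 = 0 := by ring
    rw [this]; simp
  refine ⟨?_, hI⟩
  by_contra hc
  rw [integral_undef hc] at hI
  exact (Real.exp_pos (-s)).ne hI

lemma bkF_integrable (d : ℕ) :
    Integrable (bkF d) ((volume : Measure (EuclideanSpace ℝ (Fin d))).prod
      (volume.restrict (Ioi (0:ℝ)))) := by
  have hm : Measurable (bkF d) := by unfold bkF; fun_prop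
  rw [integrable_prod_iff' hm.aestronglyMeasurable]
  constructor
  · filter_upwards [ae_restrict_mem measurableSet_Ioi] with s hs
    exact (bkF_section d s hs).1
  · have : IntegrableOn (fun s : ℝ => Real.exp (-s)) (Ioi 0) := integrableOn_exp_neg_Ioi 0
    refine this.congr_fun (fun s hs => ?_) measurableSet_Ioi
    refine (bkF_section d s hs).2.symm.trans ?_
    refine integral_congr_ae (Filter.Eventually.of_forall fun x => ?_)
    exact (Real.norm_of_nonneg (bkF_nonneg d x s hs)).symm

lemma bk_nonneg (d : ℕ) (x : EuclideanSpace ℝ (Fin d)) : 0 ≤ besselKernel d x :=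
  setIntegral_nonneg measurableSet_Ioi fun s hs => bkF_nonneg d x s hs

lemma bk_integrable (d : ℕ) : Integrable (besselKernel d) :=
  (bkF_integrable d).integral_prod_left

lemma bk_lower (d : ℕ) (R : ℝ) : ∃ c : ℝ, 0 < c ∧
    ∀ᵐ x : EuclideanSpace ℝ (Fin d), ‖x‖ < R → c ≤ besselKernel d x := by
  refine ⟨Real.exp (-2) * (4 * π * 2) ^ (-(d:ℝ)/2) * Real.exp (-R^2/4), by positivity, ?_⟩
  filter_upwards [(bkF_integrable d).prod_right_ae] with x hx hxR
  have hx' : IntegrableOn (fun s => bkF d (x, s)) (Ioi 0) := hx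
  have hsub : Icc (1:ℝ) 2 ⊆ Ioi 0 := fun s hs => lt_of_lt_of_le one_pos hs.1
  have h1 : ∫ s in Icc (1:ℝ) 2, bkF d (x, s) ≤ besselKernel d x := by
    refine setIntegral_mono_set hx' ?_ hsub.eventuallyLE
    filter_upwards [ae_restrict_mem measurableSet_Ioi] with s hs
    exact bkF_nonneg d x s hs
  refine le_trans ?_ h1
  have h2 : ∫ s in Icc (1:ℝ) 2,
      (Real.exp (-2) * (4 * π * 2) ^ (-(d:ℝ)/2) * Real.exp (-R^2/4)) ≤
      ∫ s in Icc (1:ℝ) 2, bkF d (x, s) := by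
    refine setIntegral_mono_on (integrableOn_const (by simp)) (hx'.mono_set hsub) measurableSet_Icc ?_
    intro s hs
    have hs0 : 0 < s := hsub hs
    unfold bkF
    have e1 : Real.exp (-2) ≤ Real.exp (-s) := Real.exp_le_exp.2 (by linarith [hs.2])
    have e2 : (4 * π * 2) ^ (-(d:ℝ)/2) ≤ (4 * π * s) ^ (-(d:ℝ)/2) := by
      apply Real.rpow_le_rpow_of_nonpos (by positivity)
      · have := hs.2; gcongr
      · have : (0:ℝ) ≤ d := by positivity
        linarith
    have e3 : Real.exp (-R^2/4) ≤ Real.exp (-‖x‖^2/(4*s)) := by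
      apply Real.exp_le_exp.2
      rw [neg_div, neg_div, neg_le_neg_iff]
      have : ‖x‖^2 ≤ R^2 := by gcongr
      have h4 : 4 ≤ 4 * s := by linarith [hs.1]
      exact div_le_div₀ (by positivity) this (by norm_num) h4
    dsimp only
    gcongr
  refine le_trans (le_of_eq ?_) h2
  rw [setIntegral_const]
  norm_num [Measure.real]

lemma big_ball (d : ℕ) (hd : 1 ≤ d) (M : ENNReal) (hM : M ≠ ⊤) :
    ∃ R : ℝ, M < volume (Metric.ball (0 : EuclideanSpace ℝ (Fin d)) R) := by
  have : Nonempty (Fin d) := ⟨⟨0, hd⟩⟩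
  have hmono : Monotone fun n : ℕ => Metric.ball (0 : EuclideanSpace ℝ (Fin d)) n :=
    fun a b h => Metric.ball_subset_ball (by exact_mod_cast h)
  have h := tendsto_measure_iUnion_atTop (μ := volume) hmono
  rw [Metric.iUnion_ball_nat, measure_univ_of_isAddLeftInvariant] at h
  obtain ⟨n, hn⟩ := (h.eventually (lt_mem_nhds hM.lt_top)).exists
  exact ⟨n, hn⟩

/-- the fractional Poincaré-type lemma (Lemma `lem100`). -/
theorem stmt_0 (d : ℕ) (hd : 1 ≤ d) (C₁ : ℝ) (hC₁ : 0 < C₁) (p : ℝ) (hp : 1 ≤ p) :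
    ∃ ε₀ : ℝ, 0 < ε₀ ∧
      ∀ f : EuclideanSpace ℝ (Fin d) → ℝ, Measurable f →
        (∀ x, 0 ≤ f x ∧ f x ≤ f 0) →
        eLpNorm f (ENNReal.ofReal p) volume ≤ ENNReal.ofReal (C₁ * f 0) →
        ε₀ * f 0 ≤ ∫ y, besselKernel d y * (f 0 - f y) := by
  obtain ⟨R, hR⟩ := big_ball d hd (ENNReal.ofReal ((2 * C₁) ^ p) + 1) (by simp)
  obtain ⟨c, hc, hcK⟩ := bk_lower d R
  refine ⟨c / 2, by positivity, fun f hf hf0 hL => ?_⟩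
  have hnn : ∀ y, 0 ≤ besselKernel d y * (f 0 - f y) := fun y =>
    mul_nonneg (bk_nonneg d y) (by linarith [(hf0 y).2])
  rcases (hf0 0).1.eq_or_lt with h0 | h0
  · rw [← h0, mul_zero]
    rw [← h0] at hnn
    exact integral_nonneg hnn
  have hp0 : 0 < p := by linarith
  have hint : Integrable (fun y => besselKernel d y * (f 0 - f y)) := by
    refine (bk_integrable d).mul_bdd (c := f 0) (by fun_prop) ?_
    refine Filter.Eventually.of_forall fun y => ?_
    rw [Real.norm_of_nonneg (by linarith [(hf0 y).2])]
    linarith [(hf0 y).1]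
  -- Markov
  set S : Set (EuclideanSpace ℝ (Fin d)) := {x | f 0 / 2 ≤ f x} with hS
  have hSm : MeasurableSet S := measurableSet_le measurable_const hf
  have hSvol : volume S ≤ ENNReal.ofReal ((2 * C₁) ^ p) := by
    have hmk := mul_meas_ge_le_pow_eLpNorm' (volume : Measure (EuclideanSpace ℝ (Fin d)))
      (p := ENNReal.ofReal p) (by simpa using hp0) (by simp) hf.aestronglyMeasurable
      (ENNReal.ofReal (f 0 / 2))
    rw [ENNReal.toReal_ofReal hp0.le] at hmk
    have hset : {x | ENNReal.ofReal (f 0 / 2) ≤ ‖f x‖ₑ} = S := by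
      ext x
      simp only [hS, mem_ofPred_eq]
      rw [Real.enorm_of_nonneg (hf0 x).1, ENNReal.ofReal_le_ofReal_iff (hf0 x).1]
    rw [hset] at hmk
    have h2 : ENNReal.ofReal (f 0 / 2) ^ p * volume S ≤
        ENNReal.ofReal (f 0 / 2) ^ p * ENNReal.ofReal ((2 * C₁) ^ p) := by
      refine hmk.trans ((ENNReal.rpow_le_rpow hL hp0.le).trans (le_of_eq ?_))
      rw [ENNReal.ofReal_rpow_of_pos (by positivity), ENNReal.ofReal_rpow_of_pos (by positivity),
        ← ENNReal.ofReal_mul (by positivity), ← Real.mul_rpow (by positivity) (by positivity)]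
      congr 2
      ring
    refine (ENNReal.mul_le_mul_iff_right ?_ ?_).1 h2
    · rw [ENNReal.ofReal_rpow_of_pos (by positivity)]
      simp only [ne_eq, ENNReal.ofReal_eq_zero, not_le]; positivity
    · rw [ENNReal.ofReal_rpow_of_pos (by positivity)]; simp
  set B := Metric.ball (0 : EuclideanSpace ℝ (Fin d)) R with hB
  have hBm : MeasurableSet (B \ S) := measurableSet_ball.diff hSm
  have hBfin : volume (B \ S) ≠ ⊤ :=
    ((measure_mono sdiff_subset).trans_lt measure_ball_lt_top).ne
  have hvol : 1 ≤ volume (B \ S) := by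
    refine le_trans ?_ (le_measure_sdiff)
    apply ENNReal.le_sub_of_add_le_left (ne_top_of_le_ne_top (by simp) hSvol)
    exact le_trans (by gcongr) hR.le
  have hreal : 1 ≤ volume.real (B \ S) := by
    have := ENNReal.toReal_mono hBfin hvol
    simpa [Measure.real] using this
  calc c / 2 * f 0 ≤ volume.real (B \ S) * (c * (f 0 / 2)) := by
        have : 0 ≤ c * (f 0 / 2) := by positivity
        nlinarith
    _ = ∫ y in B \ S, c * (f 0 / 2) := by rw [setIntegral_const, smul_eq_mul]
    _ ≤ ∫ y in B \ S, besselKernel d y * (f 0 - f y) := by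
        refine setIntegral_mono_on_ae (integrableOn_const hBfin) hint.integrableOn hBm ?_
        filter_upwards [hcK] with y hy hyB
        have h1 : c ≤ besselKernel d y := hy (by simpa [hB] using hyB.1)
        have h2 : f y < f 0 / 2 := not_le.1 hyB.2
        exact mul_le_mul h1 (by linarith) (by positivity) (bk_nonneg d y)
    _ ≤ ∫ y, besselKernel d y * (f 0 - f y) :=
        setIntegral_le_integral hint (Filter.Eventually.of_forall hnn)
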